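/- arXiv:1106.2762 — 3 statements merged into one kernel-verified Lean document; each statement's English description precedes it below -/
import Mathlib

section
/- Let R be a graded Cohen-Macaulay domain of Krull dimension n, finitely generated over a field in positive degrees, with Hilbert series ∑ a(d) t^d. Then there exists a constant c > 0 and a positive integer ℓ such that along an arithmetic progression of degrees d with common difference at most ℓ, one has a(d)/d^{n-1} ≥ c for all sufficiently large d in the progression; in particular limsup_d a(d)/d^{n-1} > 0. -/
open Filter

variable (k R : Type) [Field k] [CommRing R] [IsDomain R] [Algebra k R]

/-- A graded `k`-algebra is *Cohen–Macaulay* iff it is a free module over a homogeneous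
system of parameters (a homogeneous Noether normalization). -/
def IsGradedCohenMacaulay (𝒜 : ℕ → Submodule k R) : Prop :=
  ∃ (m : ℕ) (s : Fin m → R),
    (∀ i, ∃ d : ℕ, 0 < d ∧ s i ∈ 𝒜 d) ∧
    ringKrullDim ↥(Algebra.adjoin k (Set.range s)) = ringKrullDim R ∧
    Module.Free ↥(Algebra.adjoin k (Set.range s)) R

/-!
The lower bound comes from counting monomials: a generating set of homogeneous elements contains
a transcendence basis of `n` elements, and suitable powers of these share a common degree `ℓ`, so
degree `J * ℓ` contains all the linearly independent monomials of degree `J` in `n` variables.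

The limsup of real numbers carries no information unless the sequence is bounded, so an upper bound
`a(d) = O(d ^ (n - 1))` is needed as well. Noether normalization gives the summed bound
`a(0) + ⋯ + a(D) = O(D ^ n)`. Multiplication by a nonzero homogeneous element of degree `e` is
injective, so `a(d) ≤ a(d + e)`, and the sum over `d, d + e, …, d + d * e` bounds `(d + 1) * a(d)`.
-/

section NoetherNormalization

theorem ringKrullDim_eq_of_isIntegral (A B : Type*) [CommRing A] [CommRing B] [Algebra A B]
    [Algebra.IsIntegral A B] [FaithfulSMul A B] : ringKrullDim A = ringKrullDim B := by
  refine le_antisymm (iSup_le fun chain => ?_) (Order.krullDim_le_of_strictMono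
    (PrimeSpectrum.comap (algebraMap A B)) fun _ _ h => Ideal.IsIntegral.comap_lt_comap h)
  obtain ⟨P, hP⟩ := Algebra.IsIntegral.comap_surjective A B chain.head
  have : P.asIdeal.LiesOver chain.head.asIdeal := ⟨by rw [← hP]; rfl⟩
  obtain ⟨lift, lift_length, -⟩ := Ideal.exists_ltSeries_of_hasGoingUp chain P.asIdeal
  exact lift_length ▸ Order.LTSeries.length_le_krullDim lift

variable (F A : Type*) [Field F] [CommRing A] [Algebra F A] [Algebra.FiniteType F A]

theorem exists_finite_injective_algHom_of_ringKrullDim_eq {n : ℕ} (hdim : ringKrullDim A = n) :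
    ∃ g : MvPolynomial (Fin n) F →ₐ[F] A, Function.Injective g ∧ g.Finite := by
  have : Nontrivial A := not_subsingleton_iff_nontrivial.mp fun _ => by
    simp [ringKrullDim_eq_bot_of_subsingleton] at hdim
  obtain ⟨s, g, hg, hfin⟩ := exists_finite_inj_algHom_of_fg F A
  suffices s = n by subst this; exact ⟨g, hg, hfin⟩
  let := g.toRingHom.toAlgebra
  have : Module.Finite (MvPolynomial (Fin s) F) A := hfin
  have : FaithfulSMul (MvPolynomial (Fin s) F) A :=
    (faithfulSMul_iff_algebraMap_injective _ _).mpr hg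
  have hs := ringKrullDim_eq_of_isIntegral (MvPolynomial (Fin s) F) A
  rw [hdim, MvPolynomial.ringKrullDim_of_isNoetherianRing, ringKrullDim_eq_zero_of_field,
    Nat.card_fin, zero_add] at hs
  exact_mod_cast hs

theorem trdeg_eq_of_ringKrullDim_eq [IsDomain A] {n : ℕ} (hdim : ringKrullDim A = n) :
    Algebra.trdeg F A = n := by
  obtain ⟨g, hg, hfin⟩ := exists_finite_injective_algHom_of_ringKrullDim_eq F A hdim
  let := g.toRingHom.toAlgebra
  have : IsScalarTower F (MvPolynomial (Fin n) F) A := .of_algHom g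
  have : Module.Finite (MvPolynomial (Fin n) F) A := hfin
  have : FaithfulSMul (MvPolynomial (Fin n) F) A :=
    (faithfulSMul_iff_algebraMap_injective _ _).mpr hg
  have htower := lift_trdeg_add_eq F (MvPolynomial (Fin n) F) A
  rw [trdeg_eq_zero (R := MvPolynomial (Fin n) F)] at htower
  simpa using htower.symm

end NoetherNormalization

section DegreeFiltration

theorem fg_one_sup_span {B A : Type*} [CommSemiring B] [Semiring A] [Algebra B A] (s : Finset A) :
    (1 ⊔ Submodule.span B (s : Set A)).FG :=
  .sup (Submodule.one_eq_span (R := B) (A := A) ▸ Submodule.fg_span_singleton 1) ⟨s, rfl⟩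

theorem exists_le_of_fg_of_monotone {B M ι : Type*} [Semiring B] [AddCommMonoid M] [Module B M]
    [SemilatticeSup ι] [OrderBot ι] {P : ι → Submodule B M} (hP : Monotone P)
    (hcover : ∀ x, ∃ N, x ∈ P N) {W : Submodule B M} (hW : W.FG) : ∃ N, W ≤ P N := by
  obtain ⟨t, rfl⟩ := hW
  choose N hN using hcover
  exact ⟨t.sup N, Submodule.span_le.mpr fun x hx => hP (Finset.le_sup hx) (hN x)⟩

theorem pow_mul_le_pow_mul_of_mul_le_mul {M : Type*} [CommMonoid M] [Preorder M] [MulLeftMono M]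
    {a b c : M} (h : a * c ≤ b * c) (D : ℕ) : a ^ D * c ≤ b ^ D * c := by
  induction D with
  | zero => simp
  | succ D ih =>
    calc a ^ (D + 1) * c = a ^ D * (a * c) := by rw [pow_succ, mul_assoc]
      _ ≤ a ^ D * (b * c) := mul_le_mul_right h _
      _ = b * (a ^ D * c) := by rw [mul_left_comm]
      _ ≤ b * (b ^ D * c) := mul_le_mul_right ih _
      _ = b ^ (D + 1) * c := by rw [pow_succ', mul_assoc]

open Pointwise in
theorem restrictDegree_pow_le (B σ : Type*) [CommSemiring B] (N D : ℕ) :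
    MvPolynomial.restrictDegree σ B N ^ D ≤ MvPolynomial.restrictDegree σ B (D * N) := by
  rw [MvPolynomial.restrictDegree, ← MvPolynomial.restrictSupport_nsmul]
  refine MvPolynomial.restrictSupport_mono _ ?_
  induction D with
  | zero => simp
  | succ D ih =>
    rw [succ_nsmul]
    rintro _ ⟨a, ha, b, hb, rfl⟩ i
    simpa [add_mul] using add_le_add (ih ha i) (hb i)

/-- The filtration of `A` induced by `g`: the image of the polynomials whose degree in each
variable is at most `D`. Degrees are bounded variable by variable, rather than in total, because
the number of monomials is then at most a power of `D + 1`. -/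
noncomputable def degreeFiltration {B A σ : Type*} [CommSemiring B] [Semiring A] [Algebra B A]
    (g : MvPolynomial σ B →ₐ[B] A) (D : ℕ) : Submodule B A :=
  (MvPolynomial.restrictDegree σ B D).map g.toLinearMap

namespace degreeFiltration

section CommSemiring

variable {B A σ : Type*} [CommSemiring B] [Semiring A] [Algebra B A]
  (g : MvPolynomial σ B →ₐ[B] A)

theorem monotone : Monotone (degreeFiltration g) := fun _ _ h =>
  Submodule.map_mono (MvPolynomial.restrictSupport_mono _ fun _ hf i => (hf i).trans h)

theorem pow_le (N D : ℕ) : degreeFiltration g N ^ D ≤ degreeFiltration g (D * N) := by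
  rw [degreeFiltration, ← Submodule.map_pow]
  exact Submodule.map_mono (restrictDegree_pow_le B σ N D)

theorem map_mem_totalDegree (p : MvPolynomial σ B) : g p ∈ degreeFiltration g p.totalDegree :=
  Submodule.mem_map_of_mem <| MvPolynomial.restrictTotalDegree_le_restrictDegree _ _ _ <|
    (MvPolynomial.mem_restrictTotalDegree _ _ p).mpr le_rfl

end CommSemiring

theorem exists_fg_forall_fg_le_mul {B A σ : Type*} [CommRing B] [CommRing A] [Algebra B A]
    {g : MvPolynomial σ B →ₐ[B] A} (hg : g.Finite) :
    ∃ M : Submodule B A, M.FG ∧ 1 ≤ M ∧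
      ∀ W : Submodule B A, W.FG → ∃ N, W ≤ degreeFiltration g N * M := by
  let := g.toRingHom.toAlgebra
  obtain ⟨s, hs⟩ := (show Module.Finite (MvPolynomial σ B) A from hg).fg_top
  refine ⟨1 ⊔ Submodule.span B s, fg_one_sup_span s, le_sup_left, fun W hW =>
    exists_le_of_fg_of_monotone (fun N N' h => mul_le_mul_left (monotone g h) _)
      (fun x => ?_) hW⟩
  obtain ⟨c, -, rfl⟩ := Submodule.mem_span_finset.mp (hs.ge (Submodule.mem_top (x := x)))
  refine ⟨s.sup fun m => (c m).totalDegree, sum_mem fun m hm => Submodule.mul_mem_mul ?_ ?_⟩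
  · exact monotone g (Finset.le_sup (f := fun m => (c m).totalDegree) hm)
      (map_mem_totalDegree g (c m))
  · exact Submodule.mem_sup_right (Submodule.subset_span hm)

end degreeFiltration

theorem finrank_mul_le {F A : Type*} [Field F] [Ring A] [Algebra F A]
    (M N : Submodule F A) [Module.Finite F M] [Module.Finite F N] :
    Module.finrank F ↥(M * N) ≤ Module.finrank F M * Module.finrank F N := by
  rw [← Submodule.mulMap_range, ← Module.finrank_tensorProduct]
  exact LinearMap.finrank_range_le _

theorem finrank_restrictDegree_le (F σ : Type*) [Field F] [Fintype σ] (D : ℕ) :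
    Module.finrank F (MvPolynomial.restrictDegree σ F D) ≤ (D + 1) ^ Fintype.card σ := by
  classical
  let exponents (f : {f : σ →₀ ℕ | ∀ i, f i ≤ D}) : σ → Fin (D + 1) :=
    fun i => ⟨f.1 i, Nat.lt_succ_of_le (f.2 i)⟩
  have injective : Function.Injective exponents := fun f f' h =>
    Subtype.ext (Finsupp.ext fun i => congrArg Fin.val (congrFun h i))
  calc Module.finrank F (MvPolynomial.restrictDegree σ F D)
      = Nat.card {f : σ →₀ ℕ | ∀ i, f i ≤ D} :=
        Module.finrank_eq_nat_card_basis (MvPolynomial.basisRestrictSupport F _)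
    _ ≤ Nat.card (σ → Fin (D + 1)) := Nat.card_le_card_of_injective _ injective
    _ = (D + 1) ^ Fintype.card σ := by simp

instance degreeFiltration.instFinite {F A σ : Type*} [Field F] [Finite σ] [Ring A] [Algebra F A]
    (g : MvPolynomial σ F →ₐ[F] A) (D : ℕ) : Module.Finite F (degreeFiltration g D) :=
  Module.Finite.map _ _

variable {F A σ : Type*} [Field F] [Fintype σ]

theorem finrank_degreeFiltration_le [Ring A] [Algebra F A] (g : MvPolynomial σ F →ₐ[F] A)
    (D : ℕ) : Module.finrank F (degreeFiltration g D) ≤ (D + 1) ^ Fintype.card σ :=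
  (Submodule.finrank_map_le _ _).trans (finrank_restrictDegree_le F σ D)

theorem exists_finrank_pow_le_of_finite [CommRing A] [Algebra F A]
    {g : MvPolynomial σ F →ₐ[F] A} (hg : g.Finite) {U : Submodule F A} (hU : U.FG) :
    ∃ C, ∀ D, Module.finrank F ↥(U ^ D) ≤ C * (D + 1) ^ Fintype.card σ := by
  obtain ⟨M, hM, one_le_M, hcover⟩ := degreeFiltration.exists_fg_forall_fg_le_mul hg
  obtain ⟨N, hN⟩ := hcover (U * M) (hU.mul hM)
  have : Module.Finite F M := .of_fg hM
  refine ⟨(N + 1) ^ Fintype.card σ * Module.finrank F M, fun D => ?_⟩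
  have pow_le : U ^ D ≤ degreeFiltration g (D * N) * M :=
    calc U ^ D ≤ U ^ D * M := le_mul_of_one_le_right' one_le_M
      _ ≤ degreeFiltration g N ^ D * M := pow_mul_le_pow_mul_of_mul_le_mul hN D
      _ ≤ degreeFiltration g (D * N) * M := mul_le_mul_left (degreeFiltration.pow_le g N D) M
  have : Module.Finite F ↥(degreeFiltration g (D * N) * M) :=
    .of_fg ((Module.Finite.iff_fg.mp inferInstance).mul hM)
  calc Module.finrank F ↥(U ^ D)
      ≤ Module.finrank F ↥(degreeFiltration g (D * N) * M) := Submodule.finrank_mono pow_le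
    _ ≤ (D * N + 1) ^ Fintype.card σ * Module.finrank F M :=
        (finrank_mul_le _ _).trans (Nat.mul_le_mul_right _ (finrank_degreeFiltration_le g _))
    _ ≤ ((N + 1) * (D + 1)) ^ Fintype.card σ * Module.finrank F M := by
        gcongr; nlinarith
    _ = (N + 1) ^ Fintype.card σ * Module.finrank F M * (D + 1) ^ Fintype.card σ := by
        rw [mul_pow]; ring

end DegreeFiltration

section GradedAlgebra

variable {B A : Type*} [CommRing B] [CommRing A] [Algebra B A] (𝒜 : ℕ → Submodule B A)
  [GradedAlgebra 𝒜]

theorem exists_finset_homogeneous_adjoin_eq_top (h0 : 𝒜 0 = 1) [Algebra.FiniteType B A] :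
    ∃ S : Finset A, Algebra.adjoin B (S : Set A) = ⊤ ∧ ∀ x ∈ S, ∃ d, d ≠ 0 ∧ x ∈ 𝒜 d := by
  have : IsScalarTower B (𝒜 0) A := ⟨fun c r x => smul_mul_assoc c (r : A) x⟩
  have : Algebra.FiniteType (𝒜 0) A := .of_restrictScalars_finiteType B (𝒜 0) A
  obtain ⟨S, hS, hSd⟩ := GradedAlgebra.exists_finset_adjoin_eq_top_and_homogeneous_ne_zero 𝒜
  refine ⟨S, Algebra.eq_top_iff.mpr fun x => ?_, hSd⟩
  induction Algebra.eq_top_iff.mp hS x using Algebra.adjoin_induction with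
  | mem s hs => exact Algebra.subset_adjoin hs
  | algebraMap r =>
    obtain ⟨c, hc⟩ := Submodule.mem_one.mp (h0.le r.2)
    exact Set.mem_of_eq_of_mem hc.symm (Subalgebra.algebraMap_mem _ c)
  | add x y _ _ hx hy => exact add_mem hx hy
  | mul x y _ _ hx hy => exact mul_mem hx hy

variable {𝒜}

theorem exists_mem_inf_pow_of_mem_closure {S : Set A} (hSd : ∀ x ∈ S, ∃ d, d ≠ 0 ∧ x ∈ 𝒜 d)
    {U : Submodule B A} (one_le_U : 1 ≤ U) (hSU : S ⊆ U) {x : A} (hx : x ∈ Submonoid.closure S) :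
    ∃ d, x ∈ 𝒜 d ∧ x ∈ U ^ d := by
  induction hx using Submonoid.closure_induction with
  | mem s hs =>
    obtain ⟨d, hd, hsd⟩ := hSd s hs
    exact ⟨d, hsd, le_self_pow₀ one_le_U hd (hSU hs)⟩
  | one => exact ⟨0, SetLike.one_mem_graded 𝒜, pow_zero U ▸ Submodule.one_le.mp le_rfl⟩
  | mul x y _ _ hx hy =>
    obtain ⟨d, hxd, hxU⟩ := hx
    obtain ⟨e, hye, hyU⟩ := hy
    exact ⟨d + e, SetLike.mul_mem_graded hxd hye, pow_add U d e ▸ Submodule.mul_mem_mul hxU hyU⟩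

theorem homogeneous_le_pow {S : Set A} (hS : Algebra.adjoin B S = ⊤)
    (hSd : ∀ x ∈ S, ∃ d, d ≠ 0 ∧ x ∈ 𝒜 d) {U : Submodule B A} (one_le_U : 1 ≤ U) (hSU : S ⊆ U)
    (d : ℕ) : 𝒜 d ≤ U ^ d := by
  suffices ∀ x, GradedAlgebra.proj 𝒜 d x ∈ U ^ d by
    intro x hx
    simpa only [GradedAlgebra.proj_apply, DirectSum.decompose_of_mem_same 𝒜 hx] using this x
  intro x
  have hx : x ∈ Submodule.span B (Submonoid.closure S : Set A) := by
    rw [← Algebra.adjoin_eq_span, hS]; trivial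
  induction hx using Submodule.span_induction with
  | mem m hm =>
    obtain ⟨e, hme, hmU⟩ := exists_mem_inf_pow_of_mem_closure hSd one_le_U hSU hm
    rw [GradedAlgebra.proj_apply]
    obtain rfl | hed := eq_or_ne e d
    · rwa [DirectSum.decompose_of_mem_same 𝒜 hme]
    · rw [DirectSum.decompose_of_mem_ne 𝒜 hme hed]
      exact zero_mem _
  | zero => simp
  | add x y _ _ hx hy => rw [map_add]; exact add_mem hx hy
  | smul c x _ hx => rw [map_smul]; exact Submodule.smul_mem _ c hx

theorem exists_fg_homogeneous_le_pow [Algebra.FiniteType B A] (h0 : 𝒜 0 = 1) :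
    ∃ U : Submodule B A, U.FG ∧ 1 ≤ U ∧ ∀ d, 𝒜 d ≤ U ^ d := by
  obtain ⟨S, hS, hSd⟩ := exists_finset_homogeneous_adjoin_eq_top 𝒜 h0
  exact ⟨1 ⊔ Submodule.span B S, fg_one_sup_span S, le_sup_left, homogeneous_le_pow hS hSd
    le_sup_left fun s hs => Submodule.mem_sup_right (Submodule.subset_span hs)⟩

theorem finite_homogeneous [IsNoetherianRing B] [Algebra.FiniteType B A] (h0 : 𝒜 0 = 1) (d : ℕ) :
    Module.Finite B (𝒜 d) := by
  obtain ⟨U, hU, -, hle⟩ := exists_fg_homogeneous_le_pow h0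
  have := isNoetherian_of_fg_of_noetherian _ (hU.pow d)
  exact .of_injective _ (Submodule.inclusion_injective (hle d))

end GradedAlgebra

theorem finrank_finset_sup_eq_sum {F V ι : Type*} [DivisionRing F] [AddCommGroup V] [Module F V]
    {p : ι → Submodule F V} [∀ i, Module.Finite F (p i)] {s : Finset ι} (hs : s.SupIndep p) :
    Module.finrank F ↥(s.sup p) = ∑ i ∈ s, Module.finrank F (p i) := by
  classical
  induction s using Finset.induction_on with
  | empty => simp
  | insert i s hi ih =>
    have hdisj : Disjoint (p i) (s.sup p) :=
      hs (Finset.subset_insert i s) (Finset.mem_insert_self i s) hi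
    have : Module.Finite F ↥(s.sup p) := Submodule.finite_finset_sup s p
    have := Submodule.finrank_sup_add_finrank_inf_eq (p i) (s.sup p)
    rw [hdisj.eq_bot, finrank_bot, add_zero, ih (hs.subset (Finset.subset_insert i s))] at this
    rw [Finset.sup_insert, this, Finset.sum_insert hi]

section UpperBound

theorem le_mul_pow_of_sum_le {a : ℕ → ℕ} {C e n : ℕ} (he : e ≠ 0)
    (hmono : ∀ d, a d ≤ a (d + e))
    (hsum : ∀ D, ∑ d ∈ Finset.range (D + 1), a d ≤ C * (D + 1) ^ (n + 1)) (d : ℕ) :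
    a d ≤ C * (e + 1) ^ (n + 1) * (d + 1) ^ n := by
  have hshift (j : ℕ) : a d ≤ a (d + j * e) := by
    induction j with
    | zero => simp
    | succ j ih =>
      exact ih.trans (by simpa only [add_mul, one_mul, add_assoc] using hmono (d + j * e))
  have hinj : Set.InjOn (fun j => d + j * e) (Finset.range (d + 1)) := fun i _ j _ h =>
    Nat.eq_of_mul_eq_mul_right (Nat.pos_of_ne_zero he) (Nat.add_left_cancel h)
  refine Nat.le_of_mul_le_mul_left ?_ (Nat.succ_pos d)
  calc (d + 1) * a d = ∑ _j ∈ Finset.range (d + 1), a d := by simp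
    _ ≤ ∑ j ∈ Finset.range (d + 1), a (d + j * e) := Finset.sum_le_sum fun j _ => hshift j
    _ = ∑ i ∈ (Finset.range (d + 1)).image fun j => d + j * e, a i := (Finset.sum_image hinj).symm
    _ ≤ ∑ i ∈ Finset.range (d + d * e + 1), a i := by
        refine Finset.sum_le_sum_of_subset (Finset.image_subset_iff.mpr fun j hj => ?_)
        rw [Finset.mem_range, Nat.lt_succ_iff] at hj ⊢
        gcongr
    _ ≤ C * (d + d * e + 1) ^ (n + 1) := hsum _
    _ ≤ C * ((e + 1) * (d + 1)) ^ (n + 1) := by gcongr; nlinarith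
    _ = (d + 1) * (C * (e + 1) ^ (n + 1) * (d + 1) ^ n) := by rw [mul_pow]; ring

variable {F A : Type*} [Field F] [CommRing A] [Algebra F A] {𝒜 : ℕ → Submodule F A}
  [GradedAlgebra 𝒜]

theorem finrank_homogeneous_le_finrank_add [NoZeroDivisors A] {x : A} (hx : x ≠ 0) {e : ℕ}
    (hxe : x ∈ 𝒜 e) (d : ℕ) [Module.Finite F (𝒜 (d + e))] :
    Module.finrank F (𝒜 d) ≤ Module.finrank F (𝒜 (d + e)) :=
  LinearMap.finrank_le_finrank_of_injective
    (f := (LinearMap.mulRight F x).restrict fun _ hy => SetLike.mul_mem_graded hy hxe)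
    fun _ _ h => Subtype.ext (mul_right_cancel₀ hx (congrArg Subtype.val h))

theorem sum_finrank_le_finrank_pow {U : Submodule F A} (hU : U.FG) (one_le_U : 1 ≤ U)
    (hle : ∀ d, 𝒜 d ≤ U ^ d) (D : ℕ) :
    ∑ d ∈ Finset.range (D + 1), Module.finrank F (𝒜 d) ≤ Module.finrank F ↥(U ^ D) := by
  have (d : ℕ) : Module.Finite F ↥(U ^ d) := .of_fg (hU.pow d)
  have (d : ℕ) : Module.Finite F (𝒜 d) := Submodule.finiteDimensional_of_le (hle d)
  have hindep : (Finset.range (D + 1)).SupIndep 𝒜 :=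
    (DirectSum.Decomposition.isInternal 𝒜).submodule_iSupIndep.supIndep' _
  rw [← finrank_finset_sup_eq_sum hindep]
  refine Submodule.finrank_mono (Finset.sup_le fun d hd => (hle d).trans ?_)
  exact pow_le_pow_right₀ one_le_U (Finset.mem_range_succ_iff.mp hd)

theorem exists_finrank_homogeneous_le [IsDomain A] [Algebra.FiniteType F A] (h0 : 𝒜 0 = 1) {n : ℕ}
    (hdim : ringKrullDim A = (n + 1 : ℕ)) {x : A} (hx : x ≠ 0) {e : ℕ} (he : e ≠ 0)
    (hxe : x ∈ 𝒜 e) : ∃ C, ∀ d, Module.finrank F (𝒜 d) ≤ C * (d + 1) ^ n := by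
  obtain ⟨U, hU, one_le_U, hle⟩ := exists_fg_homogeneous_le_pow h0
  obtain ⟨g, -, hg⟩ := exists_finite_injective_algHom_of_ringKrullDim_eq F A hdim
  obtain ⟨C, hC⟩ := exists_finrank_pow_le_of_finite hg hU
  rw [Fintype.card_fin] at hC
  have := finite_homogeneous h0
  exact ⟨_, le_mul_pow_of_sum_le he (fun d => finrank_homogeneous_le_finrank_add hx hxe d) fun D =>
    (sum_finrank_le_finrank_pow hU one_le_U hle D).trans (hC D)⟩

end UpperBound

section LowerBound

theorem algebraicIndependent_pow {B A ι : Type*} [CommRing B] [CommRing A] [Algebra B A] {x : ι → A}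
    (hx : AlgebraicIndependent B x) {m : ι → ℕ} (hm : ∀ i, m i ≠ 0) :
    AlgebraicIndependent B fun i => x i ^ m i := by
  simpa using hx.polynomial_aeval_of_transcendental
    fun i => (Polynomial.transcendental_X B).pow (Nat.pos_of_ne_zero (hm i))

theorem exists_algebraicIndependent_mem_of_adjoin_eq_top {F A : Type*} [Field F] [CommRing A]
    [IsDomain A] [Algebra F A] [Algebra.FiniteType F A] {n : ℕ} (hdim : ringKrullDim A = n)
    {S : Set A} (hS : Algebra.adjoin F S = ⊤) :
    ∃ y : Fin n → A, AlgebraicIndependent F y ∧ ∀ i, y i ∈ S := by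
  have : Algebra.IsAlgebraic (Algebra.adjoin F S) A :=
    ⟨fun a => isAlgebraic_algebraMap (⟨a, hS ▸ Algebra.mem_top⟩ : Algebra.adjoin F S)⟩
  obtain ⟨T, hTS, hT⟩ := exists_isTranscendenceBasis_subset (R := F) S
  have hcard : Cardinal.mk T = Cardinal.mk (ULift (Fin n)) := by
    simpa using hT.cardinalMk_eq_trdeg.trans (trdeg_eq_of_ringKrullDim_eq F A hdim)
  obtain ⟨eqv⟩ := Cardinal.eq.mp hcard
  let index : Fin n ≃ T := Equiv.ulift.symm.trans eqv.symm
  exact ⟨fun i => index i, hT.1.comp index index.injective, fun i => hTS (index i).2⟩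

theorem pow_le_factorial_mul_multichoose (n J : ℕ) :
    J ^ n ≤ n.factorial * (n + 1).multichoose J := by
  have hchoose : (n + 1).multichoose J = (J + n).choose n := by
    rw [Nat.multichoose_eq, show n + 1 + J - 1 = J + n by omega, Nat.choose_symm_add]
  rw [hchoose, ← Nat.ascFactorial_eq_factorial_mul_choose]
  exact (Nat.pow_le_pow_left J.le_succ n).trans (Nat.pow_succ_le_ascFactorial (J + 1) n)

variable {F A : Type*} [Field F] [CommRing A] [Algebra F A] {𝒜 : ℕ → Submodule F A}
  [GradedAlgebra 𝒜]

theorem exists_algebraicIndependent_homogeneous [IsDomain A] [Algebra.FiniteType F A]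
    (h0 : 𝒜 0 = 1) {n : ℕ} (hdim : ringKrullDim A = n) :
    ∃ (ℓ : ℕ) (z : Fin n → A), ℓ ≠ 0 ∧ AlgebraicIndependent F z ∧ ∀ i, z i ∈ 𝒜 ℓ := by
  obtain ⟨S, hS, hSd⟩ := exists_finset_homogeneous_adjoin_eq_top 𝒜 h0
  obtain ⟨y, hy, hyS⟩ := exists_algebraicIndependent_mem_of_adjoin_eq_top hdim hS
  choose e he hye using fun i => hSd (y i) (hyS i)
  have hℓ : ∏ i, e i ≠ 0 := Finset.prod_ne_zero_iff.mpr fun i _ => he i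
  have hdvd (i) : (∏ i, e i) / e i * e i = ∏ i, e i :=
    Nat.div_mul_cancel (Finset.dvd_prod_of_mem e (Finset.mem_univ i))
  refine ⟨∏ i, e i, fun i => y i ^ ((∏ i, e i) / e i), hℓ,
    algebraicIndependent_pow hy fun i h => ?_, fun i => ?_⟩
  · exact hℓ (by rw [← hdvd i, h, zero_mul])
  · simpa only [smul_eq_mul, hdvd] using SetLike.pow_mem_graded ((∏ i, e i) / e i) (hye i)

theorem multichoose_le_finrank {ι : Type*} [Fintype ι] {z : ι → A} (hz : AlgebraicIndependent F z)
    {ℓ : ℕ} (hzℓ : ∀ i, z i ∈ 𝒜 ℓ) (J : ℕ) [Module.Finite F (𝒜 (J * ℓ))] :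
    (Fintype.card ι).multichoose J ≤ Module.finrank F (𝒜 (J * ℓ)) := by
  classical
  let exponents := (Finset.univ : Finset ι).finsuppAntidiag J
  let monomial (α : exponents) : A := ∏ i, z i ^ α.1 i
  have hmem (α : exponents) : monomial α ∈ 𝒜 (J * ℓ) := by
    have hα : ∑ i, α.1 i = J := (Finset.mem_finsuppAntidiag.mp α.2).1
    simpa only [smul_eq_mul, ← Finset.sum_mul, hα] using
      SetLike.prod_pow_mem_graded 𝒜 (fun _ => ℓ) z (F := Finset.univ) α.1 fun i _ => hzℓ i
  have hindep : LinearIndependent F monomial := by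
    have heval : (MvPolynomial.aeval z).toLinearMap ∘ MvPolynomial.basisMonomials ι F ∘
        (Subtype.val : exponents → ι →₀ ℕ) = monomial := by
      ext α
      simp [monomial, MvPolynomial.aeval_monomial, Finsupp.prod_fintype]
    exact heval ▸ ((MvPolynomial.basisMonomials ι F).linearIndependent.comp _
      Subtype.val_injective).map' (MvPolynomial.aeval z).toLinearMap (LinearMap.ker_eq_bot.mpr hz)
  have hindep' : LinearIndependent F fun α => (⟨monomial α, hmem α⟩ : 𝒜 (J * ℓ)) :=
    .of_comp (𝒜 (J * ℓ)).subtype hindep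
  simpa only [Fintype.card_coe, exponents, Finset.card_finsuppAntidiag_nat_eq_multichoose,
    Finset.card_univ] using hindep'.fintype_card_le_finrank

theorem pow_le_factorial_mul_finrank {n : ℕ} {z : Fin (n + 1) → A} (hz : AlgebraicIndependent F z)
    {ℓ : ℕ} (hzℓ : ∀ i, z i ∈ 𝒜 ℓ) (J : ℕ) [Module.Finite F (𝒜 (J * ℓ))] :
    J ^ n ≤ n.factorial * Module.finrank F (𝒜 (J * ℓ)) :=
  (pow_le_factorial_mul_multichoose n J).trans <| Nat.mul_le_mul_left _ <| by
    simpa only [Fintype.card_fin] using multichoose_le_finrank hz hzℓ J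

end LowerBound

section Asymptotics

theorem one_div_le_div_pow_of_pow_le {a m n ℓ J : ℕ} (hm : m ≠ 0) (hℓ : ℓ ≠ 0) (hJ : J ≠ 0)
    (h : J ^ n ≤ m * a) : 1 / (m * ℓ ^ n : ℝ) ≤ a / ((J * ℓ : ℕ) : ℝ) ^ n := by
  rw [div_le_div_iff₀ (by positivity) (by positivity), one_mul, Nat.cast_mul, mul_pow,
    ← mul_assoc, mul_comm (a : ℝ)]
  gcongr
  exact_mod_cast h

theorem limsup_div_pow_pos {a : ℕ → ℕ} {C n : ℕ} (hup : ∀ d, a d ≤ C * (d + 1) ^ n) {c : ℝ}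
    (hc : 0 < c) (hlow : ∃ᶠ d : ℕ in atTop, c ≤ (a d : ℝ) / (d : ℝ) ^ n) :
    0 < limsup (fun d : ℕ => (a d : ℝ) / (d : ℝ) ^ n) atTop := by
  refine hc.trans_le (le_limsup_of_frequently_le hlow
    (isBoundedUnder_of_eventually_le (a := (C : ℝ) * 2 ^ n) ?_))
  filter_upwards [eventually_ge_atTop 1] with d hd
  rw [div_le_iff₀ (by positivity), mul_assoc, ← mul_pow]
  calc (a d : ℝ) ≤ C * ((d : ℝ) + 1) ^ n := by exact_mod_cast hup d
    _ ≤ C * (2 * (d : ℝ)) ^ n := by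
        have : (1 : ℝ) ≤ d := by exact_mod_cast hd
        gcongr
        linarith

end Asymptotics

theorem graded_CM_domain_hilbert_growth_general {F A : Type*} [Field F] [CommRing A] [IsDomain A]
    [Algebra F A] [Algebra.FiniteType F A] (𝒜 : ℕ → Submodule F A) [GradedAlgebra 𝒜]
    (h0 : 𝒜 0 = 1) (n : ℕ) (hn : 1 ≤ n) (hdim : ringKrullDim A = n) :
    ∃ c : ℝ, 0 < c ∧
      (∃ ℓ : ℕ, 1 ≤ ℓ ∧ ∃ d₀ : ℕ, 0 < d₀ ∧ ∀ j : ℕ,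
        c ≤ (Module.finrank F (𝒜 (d₀ + j * ℓ)) : ℝ) / ((d₀ + j * ℓ : ℕ) : ℝ) ^ (n - 1)) ∧
      0 < limsup (fun d : ℕ => (Module.finrank F (𝒜 d) : ℝ) / (d : ℝ) ^ (n - 1)) atTop := by
  obtain ⟨n, rfl⟩ := Nat.exists_eq_add_of_le' hn
  obtain ⟨ℓ, z, hℓ, hz, hzℓ⟩ := exists_algebraicIndependent_homogeneous h0 hdim
  obtain ⟨C, hC⟩ := exists_finrank_homogeneous_le h0 hdim (hz.ne_zero 0) hℓ (hzℓ 0)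
  have := finite_homogeneous h0
  have hlow (j : ℕ) : 1 / (n.factorial * ℓ ^ n : ℝ) ≤
      Module.finrank F (𝒜 (ℓ + j * ℓ)) / ((ℓ + j * ℓ : ℕ) : ℝ) ^ n := by
    rw [show ℓ + j * ℓ = (j + 1) * ℓ by ring]
    exact one_div_le_div_pow_of_pow_le n.factorial_ne_zero hℓ j.succ_ne_zero
      (pow_le_factorial_mul_finrank hz hzℓ (j + 1))
  have hc : 0 < 1 / (n.factorial * ℓ ^ n : ℝ) := by positivity
  refine ⟨_, hc, ⟨ℓ, Nat.pos_of_ne_zero hℓ, ℓ, Nat.pos_of_ne_zero hℓ, hlow⟩,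
    limsup_div_pow_pos hC hc (frequently_atTop.mpr fun b => ⟨ℓ + b * ℓ, ?_, hlow b⟩)⟩
  exact (Nat.le_mul_of_pos_right b (Nat.pos_of_ne_zero hℓ)).trans (Nat.le_add_left _ _)

/-- Let `R = ⊕_{d≥0} R_d` be a graded Cohen–Macaulay domain of Krull dimension `n`,
finitely generated over the field `R_0 = k` in positive degrees, with Hilbert series
`∑ a(d) t^d` where `a(d) = dim_k R_d`.  Then there are `c > 0` and `ℓ ≥ 1` such that
along an arithmetic progression of degrees with common difference `ℓ` one has
`a(d)/d^{n-1} ≥ c`; in particular `limsup_d a(d)/d^{n-1} > 0`. -/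
theorem graded_CM_domain_hilbert_growth (𝒜 : ℕ → Submodule k R) [GradedAlgebra 𝒜]
    (h0 : 𝒜 0 = (1 : Submodule k R)) (hfg : Algebra.FiniteType k R)
    (hCM : IsGradedCohenMacaulay k R 𝒜)
    (n : ℕ) (hn : 1 ≤ n) (hdim : ringKrullDim R = (n : WithBot (WithTop ℕ))) :
    ∃ c : ℝ, 0 < c ∧
      (∃ ℓ : ℕ, 1 ≤ ℓ ∧ ∃ d₀ : ℕ, 0 < d₀ ∧ ∀ j : ℕ,
        c ≤ (Module.finrank k ↥(𝒜 (d₀ + j * ℓ)) : ℝ) / ((d₀ + j * ℓ : ℕ) : ℝ) ^ (n - 1)) ∧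
      0 < limsup (fun d : ℕ => (Module.finrank k ↥(𝒜 d) : ℝ) / (d : ℝ) ^ (n - 1)) atTop :=
  graded_CM_domain_hilbert_growth_general 𝒜 h0 n hn hdim
end

section
/- Let T = k* act on k[x_1, ..., x_n, x_{-n}] by t·x_i = t^i x_i (and t·x_{-n} = t^{-n} x_{-n}). Identify Z/nZ with the group of n-th roots of unity in T. Then the evaluation map f(x_1,...,x_n,x_{-n}) ↦ f(x_1,...,x_n,1) restricts to a ring isomorphism from the T-invariants k[x_1,...,x_n,x_{-n}]^T onto the Z/nZ-invariants k[x_1,...,x_n]^{Z/nZ}. -/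
/-!
Both actions are diagonal on monomials, so both invariant rings are degree-zero parts of gradings:
for the torus, of the `ℤ`-grading by weight (as `k` is infinite, no character `t ↦ t^d` of `k*` with
`d ≠ 0` is trivial), and for the cyclic group, of the reduction of that grading modulo `n`. A
monomial of weight `d` in `x_1, …, x_n` is the value at `x_{-n} = 1` of a monomial of total weight
zero if and only if `n` divides `d`, and then of exactly one, with exponent `d / n` at `x_{-n}`.
-/

open MvPolynomial

variable (k : Type) [Field k]

/-- The action of `t ∈ k* = 𝔾ₘ` on a polynomial ring in which the variable `x_i` has
weight `w i`: the substitution `x_i ↦ t^{w i} x_i`. -/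
noncomputable def torusAct {ι : Type} (w : ι → ℤ) (t : kˣ) :
    MvPolynomial ι k →ₐ[k] MvPolynomial ι k :=
  aeval (fun i => ((t ^ w i : kˣ) : k) • X i)

/-- The ring of invariants of the torus `k*` acting on a polynomial ring with the
variable `x_i` of weight `w i`. -/
noncomputable def torusInv {ι : Type} (w : ι → ℤ) : Subalgebra k (MvPolynomial ι k) where
  carrier := {p | ∀ t : kˣ, torusAct k w t p = p}
  mul_mem' := by intro a b ha hb t; rw [map_mul, ha t, hb t]
  add_mem' := by intro a b ha hb t; rw [map_add, ha t, hb t]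
  algebraMap_mem' := by intro r t; exact (torusAct k w t).commutes r

/-- The minimal cardinality of a (finite) generating set of a subalgebra. -/
noncomputable def minGens {R : Type} [CommRing R] [Algebra k R] (A : Subalgebra k R) : ℕ :=
  sInf {c : ℕ | ∃ S : Finset R, S.card = c ∧ Algebra.adjoin k (S : Set R) = A}

/-- The weight function for the variables `x_1, …, x_n, x_{-n}`: the variable `x_i`
(encoded `some i`) has weight `i + 1 ∈ {1, …, n}`, and `x_{-n}` (encoded `none`) has
weight `-n`. -/
def wOpt (n : ℕ) : Option (Fin n) → ℤ :=
  fun o => Option.elim o (-(n : ℤ)) (fun i => (i : ℤ) + 1)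

/-- The action of the generator of `ℤ/nℤ` (identified with the `n`-th roots of unity via
a primitive root `ζ`) on `k[x_1, …, x_n]`: `x_i ↦ ζ^i x_i`. -/
noncomputable def cyclicAct (n : ℕ) (ζ : k) : MvPolynomial (Fin n) k →ₐ[k] MvPolynomial (Fin n) k :=
  aeval (fun i => ζ ^ ((i : ℕ) + 1) • X i)

/-- The invariants of `ℤ/nℤ` acting on `k[x_1, …, x_n]` via `x_i ↦ ζ^i x_i`. -/
noncomputable def cyclicInv (n : ℕ) (ζ : k) : Subalgebra k (MvPolynomial (Fin n) k) where
  carrier := {p | cyclicAct k n ζ p = p}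
  mul_mem' := by
    intro a b ha hb
    show cyclicAct k n ζ (a * b) = a * b
    rw [map_mul, show cyclicAct k n ζ a = a from ha, show cyclicAct k n ζ b = b from hb]
  add_mem' := by
    intro a b ha hb
    show cyclicAct k n ζ (a + b) = a + b
    rw [map_add, show cyclicAct k n ζ a = a from ha, show cyclicAct k n ζ b = b from hb]
  algebraMap_mem' := by intro r; exact (cyclicAct k n ζ).commutes r

/-- The evaluation map `f(x_1, …, x_n, x_{-n}) ↦ f(x_1, …, x_n, 1)`. -/
noncomputable def evalAtOne (n : ℕ) :
    MvPolynomial (Option (Fin n)) k →ₐ[k] MvPolynomial (Fin n) k :=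
  aeval (fun o => Option.elim o 1 (fun i => X i))

section DiagonalSubstitution

variable {σ R : Type*}

lemma aeval_smul_X_monomial [CommSemiring R] (c : σ → R) (m : σ →₀ ℕ) (a : R) :
    aeval (fun i => c i • (X i : MvPolynomial σ R)) (monomial m a) =
      monomial m ((m.prod fun i e => c i ^ e) * a) := by
  simp_rw [aeval_monomial, monomial_eq, smul_eq_C_mul, mul_pow, Finsupp.prod_mul, C_mul,
    algebraMap_eq, map_finsuppProd, C_pow]
  ring

lemma coeff_aeval_smul_X [CommSemiring R] (c : σ → R) (m : σ →₀ ℕ) (p : MvPolynomial σ R) :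
    coeff m (aeval (fun i => c i • (X i : MvPolynomial σ R)) p) =
      (m.prod fun i e => c i ^ e) * coeff m p := by
  classical
  induction p using MvPolynomial.induction_on' with
  | monomial d a =>
    rw [aeval_smul_X_monomial, coeff_monomial, coeff_monomial]
    split_ifs with h
    · rw [h]
    · rw [mul_zero]
  | add p q hp hq => rw [map_add, coeff_add, hp, hq, coeff_add, mul_add]

lemma aeval_smul_X_eq_self_iff [CommSemiring R] [IsCancelMulZero R] (c : σ → R)
    (p : MvPolynomial σ R) :
    aeval (fun i => c i • (X i : MvPolynomial σ R)) p = p ↔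
      ∀ m, coeff m p ≠ 0 → (m.prod fun i e => c i ^ e) = 1 := by
  simp_rw [MvPolynomial.ext_iff, coeff_aeval_smul_X]
  refine forall_congr' fun m => ?_
  by_cases hm : coeff m p = 0 <;> simp [hm]

lemma prod_character_pow_eq {M : Type*} [AddCommMonoid M] [CommMonoid R]
    (χ : Multiplicative M →* R) (w : σ → M) (m : σ →₀ ℕ) :
    (m.prod fun i e => χ (.ofAdd (w i)) ^ e) = χ (.ofAdd (Finsupp.weight w m)) := by
  simp [Finsupp.weight_apply, Finsupp.sum, Finsupp.prod, ofAdd_sum, ofAdd_nsmul]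

end DiagonalSubstitution

section Weight

variable {σ M : Type*} [AddCommMonoid M]

lemma weight_map {N : Type*} [AddCommMonoid N] (f : M →+ N) (w : σ → M) (m : σ →₀ ℕ) :
    Finsupp.weight (fun i => f (w i)) m = f (Finsupp.weight w m) := by
  simp [Finsupp.weight_apply, map_finsuppSum]

lemma weight_natCast {A : Type*} [NonAssocSemiring A] (w : σ → ℕ) (m : σ →₀ ℕ) :
    Finsupp.weight (fun i => (w i : A)) m = (Finsupp.weight w m : ℕ) :=
  weight_map (Nat.castAddMonoidHom A) w m

lemma weight_option (w : Option σ → M) (m : Option σ →₀ ℕ) :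
    Finsupp.weight w m = m none • w none + Finsupp.weight (fun i => w (some i)) m.some :=
  m.sum_option_index_smul w

end Weight

section Invariants

lemma exists_units_zpow_ne_one {K : Type*} [Field K] [Infinite K] {d : ℤ} (hd : d ≠ 0) :
    ∃ t : Kˣ, t ^ d ≠ 1 := by
  classical
  by_contra! h
  have rootsOfUnity_eq_top : rootsOfUnity d.natAbs K = ⊤ :=
    (Subgroup.eq_top_iff' _).mpr fun t => pow_natAbs_eq_one.mpr (h t)
  have : NeZero d.natAbs := ⟨Int.natAbs_ne_zero.mpr hd⟩
  have : Finite (⊤ : Subgroup Kˣ) := rootsOfUnity_eq_top ▸ inferInstance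
  have : Finite Kˣ := .of_equiv _ Subgroup.topEquiv.toEquiv
  have : Finite (WithZero Kˣ) := inferInstanceAs (Finite (Option Kˣ))
  have : Finite K := .of_equiv _ (WithZero.withZeroUnitsEquiv (G := K)).toEquiv
  exact not_finite K

lemma mem_torusInv_iff [Infinite k] {ι : Type} (w : ι → ℤ) (p : MvPolynomial ι k) :
    p ∈ torusInv k w ↔ IsWeightedHomogeneous w p 0 := by
  have fixed_iff (t : kˣ) : torusAct k w t p = p ↔
      ∀ m, coeff m p ≠ 0 → t ^ Finsupp.weight w m = 1 := by
    rw [torusAct, aeval_smul_X_eq_self_iff]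
    refine forall₂_congr fun m _ => ?_
    rw [← Units.val_eq_one]
    exact Eq.congr_left (prod_character_pow_eq ((Units.coeHom k).comp (zpowersHom kˣ t)) w m)
  calc p ∈ torusInv k w ↔ ∀ t : kˣ, torusAct k w t p = p := Iff.rfl
    _ ↔ ∀ m, coeff m p ≠ 0 → ∀ t : kˣ, t ^ Finsupp.weight w m = 1 := by
      simp_rw [fixed_iff]
      exact ⟨fun h m hm t => h t m hm, fun h t m hm => h m hm t⟩
    _ ↔ IsWeightedHomogeneous w p 0 := by
      refine forall₂_congr fun m _ => ⟨fun h => ?_, fun h t => by rw [h, zpow_zero]⟩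
      by_contra hd
      obtain ⟨t, ht⟩ := exists_units_zpow_ne_one (K := k) hd
      exact ht (h t)

lemma mem_cyclicInv_iff {n : ℕ} {ζ : k} (hζ : IsPrimitiveRoot ζ n) (q : MvPolynomial (Fin n) k) :
    q ∈ cyclicInv k n ζ ↔
      IsWeightedHomogeneous (fun i : Fin n => (((i : ℕ) + 1 : ℕ) : ZMod n)) q 0 := by
  change cyclicAct k n ζ q = q ↔ _
  rw [cyclicAct, aeval_smul_X_eq_self_iff]
  refine forall₂_congr fun m _ => ?_
  rw [weight_natCast (fun i : Fin n => (i : ℕ) + 1), ZMod.natCast_eq_zero_iff,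
    ← hζ.pow_eq_one_iff_dvd]
  exact Eq.congr_left
    (prod_character_pow_eq (powersHom k ζ) (fun i : Fin n => (i : ℕ) + 1) m)

end Invariants

section Dehomogenization

variable {σ R : Type*} [CommSemiring R]

/-- Dehomogenization with respect to the variable `none`: it is set to `1`. -/
noncomputable def dehomogenize : MvPolynomial (Option σ) R →ₐ[R] MvPolynomial σ R :=
  aeval fun o => o.elim 1 X

lemma dehomogenize_monomial (m : Option σ →₀ ℕ) (a : R) :
    dehomogenize (monomial m a) = monomial m.some a := by
  rw [dehomogenize, aeval_monomial, monomial_eq, algebraMap_eq,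
    Finsupp.prod_option_index _ _ (fun _ => pow_zero _) (fun _ _ _ => pow_add _ _ _)]
  simp

lemma isWeightedHomogeneous_dehomogenize {M N : Type*} [AddCommMonoid M] [AddCommMonoid N]
    {w : Option σ → M} (f : M →+ N) (hf : f (w none) = 0) {p : MvPolynomial (Option σ) R} {d : M}
    (hp : IsWeightedHomogeneous w p d) :
    IsWeightedHomogeneous (fun i => f (w (some i))) (dehomogenize p) (f d) := by
  induction hp using IsWeightedHomogeneous.induction_on with
  | zero => rw [map_zero]; exact isWeightedHomogeneous_zero R _ _
  | add p q _ _ hp hq => rw [map_add]; exact hp.add hq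
  | monomial m a hm =>
    rw [dehomogenize_monomial]
    refine isWeightedHomogeneous_monomial _ _ _ ?_
    rw [weight_map f (fun i => w (some i)), ← hm, weight_option, map_add, map_nsmul, hf, smul_zero,
      zero_add]

/-- The weights `w` extended by giving the additional variable `none`, used to homogenize, the
weight `-n`. -/
def homogenizingWeight (w : σ → ℕ) (n : ℕ) : Option σ → ℤ :=
  fun o => o.elim (-n) fun i => w i

lemma weight_homogenizingWeight (w : σ → ℕ) (n : ℕ) (m : Option σ →₀ ℕ) :
    Finsupp.weight (homogenizingWeight w n) m = Finsupp.weight w m.some - n * m none := by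
  simp only [weight_option, homogenizingWeight, Option.elim_none, Option.elim_some,
    weight_natCast, nsmul_eq_mul]
  ring

lemma weight_homogenizingWeight_eq_zero_iff {w : σ → ℕ} {n : ℕ} {m : Option σ →₀ ℕ} :
    Finsupp.weight (homogenizingWeight w n) m = 0 ↔ Finsupp.weight w m.some = n * m none := by
  rw [weight_homogenizingWeight, sub_eq_zero]
  norm_cast

/-- Homogenization to weight `0` by means of the variable `none` of weight `-n`: a monomial of
weight `d` is multiplied by that variable to the power `d / n`. The division truncates, so the
result has weight `0` only if all the weights that occur are multiples of `n`. -/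
noncomputable def homogenize (w : σ → ℕ) (n : ℕ) :
    MvPolynomial σ R →ₗ[R] MvPolynomial (Option σ) R :=
  AddMonoidAlgebra.mapDomainLinearMap R R fun m => m.optionElim (Finsupp.weight w m / n)

lemma homogenize_monomial (w : σ → ℕ) (n : ℕ) (m : σ →₀ ℕ) (a : R) :
    homogenize w n (monomial m a) = monomial (m.optionElim (Finsupp.weight w m / n)) a :=
  AddMonoidAlgebra.mapDomainLinearMap_single _ a m

lemma dehomogenize_homogenize (w : σ → ℕ) (n : ℕ) (q : MvPolynomial σ R) :
    dehomogenize (homogenize w n q) = q := by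
  induction q using MvPolynomial.induction_on' with
  | monomial m a => rw [homogenize_monomial, dehomogenize_monomial, Finsupp.some_optionElim]
  | add p q hp hq => rw [map_add, map_add, hp, hq]

lemma homogenize_dehomogenize {w : σ → ℕ} {n : ℕ} (hn : n ≠ 0) {p : MvPolynomial (Option σ) R}
    (hp : IsWeightedHomogeneous (homogenizingWeight w n) p 0) :
    homogenize w n (dehomogenize p) = p := by
  induction hp using IsWeightedHomogeneous.induction_on with
  | zero => rw [map_zero, map_zero]
  | add p q _ _ hp hq => rw [map_add, map_add, hp, hq]
  | monomial m a hm =>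
    rw [dehomogenize_monomial, homogenize_monomial, weight_homogenizingWeight_eq_zero_iff.mp hm,
      Nat.mul_div_cancel_left _ (Nat.pos_of_ne_zero hn), Finsupp.optionElim_some]

lemma isWeightedHomogeneous_homogenize {w : σ → ℕ} {n : ℕ} {q : MvPolynomial σ R}
    (hq : IsWeightedHomogeneous (fun i => (w i : ZMod n)) q 0) :
    IsWeightedHomogeneous (homogenizingWeight w n) (homogenize w n q) 0 := by
  induction hq using IsWeightedHomogeneous.induction_on with
  | zero => rw [map_zero]; exact isWeightedHomogeneous_zero R _ _
  | add p q _ _ hp hq => rw [map_add]; exact hp.add hq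
  | monomial m a hm =>
    have dvd_weight : n ∣ Finsupp.weight w m := by
      rwa [weight_natCast, ZMod.natCast_eq_zero_iff] at hm
    rw [homogenize_monomial]
    refine isWeightedHomogeneous_monomial _ _ _ (weight_homogenizingWeight_eq_zero_iff.mpr ?_)
    rw [Finsupp.some_optionElim, Finsupp.optionElim_apply_none, Nat.mul_div_cancel' dvd_weight]

theorem bijOn_dehomogenize (w : σ → ℕ) {n : ℕ} (hn : n ≠ 0) :
    Set.BijOn (dehomogenize (R := R))
      {p | IsWeightedHomogeneous (homogenizingWeight w n) p 0}
      {q | IsWeightedHomogeneous (fun i => (w i : ZMod n)) q 0} := by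
  refine Set.BijOn.mk (fun p hp => ?_) ?_ ?_
  · simpa [homogenizingWeight] using isWeightedHomogeneous_dehomogenize
      (Int.castAddHom (ZMod n)) (by simp [homogenizingWeight]) hp
  · exact Set.LeftInvOn.injOn (f₁' := homogenize w n) fun p hp => homogenize_dehomogenize hn hp
  · exact fun q hq =>
      ⟨homogenize w n q, isWeightedHomogeneous_homogenize hq, dehomogenize_homogenize w n q⟩

end Dehomogenization

lemma exists_algEquiv_of_bijOn {R A B : Type*} [CommSemiring R] [Semiring A] [Semiring B]
    [Algebra R A] [Algebra R B] {f : A →ₐ[R] B} {S : Subalgebra R A} {T : Subalgebra R B}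
    (hf : Set.BijOn f S T) : ∃ φ : S ≃ₐ[R] T, ∀ a : S, (φ a : B) = f a :=
  ⟨AlgEquiv.ofBijective ((f.comp S.val).codRestrict T fun a => hf.mapsTo a.2) hf.bijective,
    fun _ => rfl⟩

theorem bijOn_evalAtOne [Infinite k] {n : ℕ} (hn : n ≠ 0) {ζ : k} (hζ : IsPrimitiveRoot ζ n) :
    Set.BijOn (evalAtOne k n) (torusInv k (wOpt n)) (cyclicInv k n ζ) := by
  have torus_eq : (torusInv k (wOpt n) : Set (MvPolynomial (Option (Fin n)) k)) =
      {p | IsWeightedHomogeneous (homogenizingWeight (fun i : Fin n => (i : ℕ) + 1) n) p 0} :=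
    Set.ext (mem_torusInv_iff k (wOpt n))
  have cyclic_eq : (cyclicInv k n ζ : Set (MvPolynomial (Fin n) k)) =
      {q | IsWeightedHomogeneous (fun i : Fin n => (((i : ℕ) + 1 : ℕ) : ZMod n)) q 0} :=
    Set.ext (mem_cyclicInv_iff k hζ)
  rw [torus_eq, cyclic_eq]
  exact bijOn_dehomogenize _ hn

theorem evalAtOne_iso_torus_cyclic_invariants_general [Infinite k] (n : ℕ) (hn : 1 ≤ n)
    (ζ : k) (hζ : IsPrimitiveRoot ζ n) :
    (∀ p ∈ torusInv k (wOpt n), evalAtOne k n p ∈ cyclicInv k n ζ) ∧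
    ∃ φ : ↥(torusInv k (wOpt n)) ≃ₐ[k] ↥(cyclicInv k n ζ),
      ∀ p : ↥(torusInv k (wOpt n)),
        (φ p : MvPolynomial (Fin n) k) = evalAtOne k n (p : MvPolynomial (Option (Fin n)) k) :=
  have hbij := bijOn_evalAtOne k (Nat.one_le_iff_ne_zero.mp hn) hζ
  ⟨hbij.mapsTo, exists_algEquiv_of_bijOn hbij⟩

/-- Let `T = k*` act on `k[x_1, …, x_n, x_{-n}]` by `t · x_i = t^i x_i` and identify
`ℤ/nℤ` with the `n`-th roots of unity in `T` via a primitive `n`-th root `ζ`.  Then the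
evaluation `f(x_1,…,x_n,x_{-n}) ↦ f(x_1,…,x_n,1)` restricts to a ring isomorphism from
the `T`-invariants onto the `ℤ/nℤ`-invariants. -/
theorem evalAtOne_iso_torus_cyclic_invariants [IsAlgClosed k] (n : ℕ) (hn : 1 ≤ n)
    (ζ : k) (hζ : IsPrimitiveRoot ζ n) :
    (∀ p ∈ torusInv k (wOpt n), evalAtOne k n p ∈ cyclicInv k n ζ) ∧
    ∃ φ : ↥(torusInv k (wOpt n)) ≃ₐ[k] ↥(cyclicInv k n ζ),
      ∀ p : ↥(torusInv k (wOpt n)),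
        (φ p : MvPolynomial (Fin n) k) = evalAtOne k n (p : MvPolynomial (Option (Fin n)) k) :=
  evalAtOne_iso_torus_cyclic_invariants_general k n hn ζ hζ
end

section
/- Olson's theorem: Every sequence of at least 3√n elements (with repetition allowed, but the paper's application uses distinct residues) of Z/nZ of distinct values, of cardinality at least 3√n, contains a nonempty subset summing to 0 in Z/nZ. Equivalently, if S ⊆ Z/nZ has |S| ≥ 3√n then some nonempty subset of S has zero sum. -/
/-!
Let `Σ(T)` be the set of subset sums of `T`, and let `λ_B(x)` count the elements of `x + B`
outside `B`, so that adjoining `x` to `T` adds exactly `λ_{Σ(T)}(x)` new sums. The function `λ_B` is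
even and subadditive, and its sum over a set `X` is at least `|B| (|X| - |B|)`. Let `A` be a
symmetric set containing `0` and generating a subgroup with at least `2 |B|` elements. If `λ_B` were
small on `A`, it would grow only linearly along the sumsets `j A`; these soon contain a set `X` of
size `2 |B|`, and averaging over `X` gives a contradiction. Hence some `a ∈ A` has
`λ_B(a) > 3 |B| / 4` or `λ_B(a) > |A| / 6`.

Let `S` have no nonempty zero-sum subset and at most one element of order two, so that
`A = S ∪ -S ∪ {0}` has at least `2 |S|` elements. If every subset of more than two thirds of `S`
generates the same subgroup as `S`, then one third of `S` can be chosen greedily, each element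
gaining many sums.
Otherwise some `x ∈ S` lies outside the subgroup generated by such a subset `U`, and adjoining `x`
doubles the number of sums of `U`. In both cases Scherk's inequality
`|Σ(T)| + |Σ(S \ T)| ≤ |Σ(S)| + 1` and induction on `S` give `|S|² + 9 ≤ 9 |Σ(S)|`.
-/

namespace Olson

open Finset
open scoped Pointwise

variable {G : Type*} [AddCommGroup G]

section ZeroSumFree

/-- No nonempty subset of `S` has sum zero. Olson's theorem bounds the size of such sets through
the number of their subset sums. -/
def ZeroSumFree (S : Finset G) : Prop := ∀ T ⊆ S, T.Nonempty → ∑ a ∈ T, a ≠ 0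

variable {S T : Finset G}

lemma ZeroSumFree.mono (hS : ZeroSumFree S) (hTS : T ⊆ S) : ZeroSumFree T :=
  fun R hR ↦ hS R (hR.trans hTS)

lemma ZeroSumFree.eq_empty (hS : ZeroSumFree S) (hTS : T ⊆ S) (hT : ∑ a ∈ T, a = 0) : T = ∅ :=
  not_nonempty_iff_eq_empty.1 fun hne ↦ hS T hTS hne hT

lemma ZeroSumFree.zero_notMem (hS : ZeroSumFree S) : 0 ∉ S := fun h ↦
  hS {0} (singleton_subset_iff.2 h) (singleton_nonempty 0) (sum_singleton ..)

lemma ZeroSumFree.addOrderOf_eq_two (hS : ZeroSumFree S) {x : G} (hx : x ∈ S) (hneg : -x ∈ S) :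
    addOrderOf x = 2 := by
  have hx_neg : x = -x := by
    classical
    by_contra hne
    exact hS {x, -x} (insert_subset hx (singleton_subset_iff.2 hneg)) (insert_nonempty ..)
      (by rw [sum_pair hne, add_neg_cancel])
  refine addOrderOf_eq_prime ?_ (ne_of_mem_of_not_mem hx hS.zero_notMem)
  rw [two_nsmul, ← eq_neg_iff_add_eq_zero]
  exact hx_neg

end ZeroSumFree

variable [DecidableEq G]

section TranslateExcess

/-- Olson's `λ_B(x)`, the number of elements of the translate `x +ᵥ B` outside `B`. When `B` is the
set of subset sums of `T`, it counts the sums gained by adjoining `x` to `T`. -/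
def translateExcess (B : Finset G) (x : G) : ℕ := #((x +ᵥ B) \ B)

lemma translateExcess_zero (B : Finset G) : translateExcess B 0 = 0 := by
  simp [translateExcess]

lemma translateExcess_neg (B : Finset G) (x : G) :
    translateExcess B (-x) = translateExcess B x := by
  calc #((-x +ᵥ B) \ B) = #(x +ᵥ ((-x +ᵥ B) \ B)) := (card_vadd_finset ..).symm
    _ = #(B \ (x +ᵥ B)) := by rw [vadd_finset_sdiff, vadd_neg_vadd]
    _ = #((x +ᵥ B) \ B) := card_sdiff_comm (card_vadd_finset x B).symm

lemma translateExcess_add_le (B : Finset G) (x y : G) :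
    translateExcess B (x + y) ≤ translateExcess B x + translateExcess B y := by
  calc #(((x + y) +ᵥ B) \ B)
      ≤ #((((x + y) +ᵥ B) \ (x +ᵥ B)) ∪ ((x +ᵥ B) \ B)) := card_le_card (sdiff_triangle _ _ _)
    _ ≤ #(((x + y) +ᵥ B) \ (x +ᵥ B)) + #((x +ᵥ B) \ B) := card_union_le _ _
    _ = #((y +ᵥ B) \ B) + #((x +ᵥ B) \ B) := by
      rw [add_vadd, ← vadd_finset_sdiff, card_vadd_finset]
    _ = #((x +ᵥ B) \ B) + #((y +ᵥ B) \ B) := add_comm _ _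

lemma translateExcess_sdiff {B K : Finset G} {x : G} (hBK : B ⊆ K) (hK : x +ᵥ K = K) :
    translateExcess (K \ B) x = translateExcess B x := by
  calc #((x +ᵥ (K \ B)) \ (K \ B)) = #((K \ (x +ᵥ B)) \ (K \ B)) := by
        rw [vadd_finset_sdiff, hK]
    _ = #(B \ (x +ᵥ B)) := by
      congr 1
      have : x +ᵥ B ⊆ K := hK ▸ vadd_finset_subset_vadd_finset hBK
      grind
    _ = #((x +ᵥ B) \ B) := card_sdiff_comm (card_vadd_finset x B).symm

lemma sum_card_inter_vadd_le (B X : Finset G) : ∑ x ∈ X, #(B ∩ (x +ᵥ B)) ≤ #B ^ 2 := by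
  calc ∑ x ∈ X, #(B ∩ (x +ᵥ B)) = ∑ x ∈ X, #{p ∈ B ×ˢ B | p.1 - p.2 = x} := by
        simp_rw [card_inter_vadd, card_sub_eq]
    _ ≤ #(B ×ˢ B) := by
      rw [sum_card_fiberwise_eq_card_filter]; exact card_filter_le _ _
    _ = #B ^ 2 := by rw [card_product, sq]

lemma card_mul_card_le_sq_add_sum_translateExcess (B X : Finset G) :
    #B * #X ≤ #B ^ 2 + ∑ x ∈ X, translateExcess B x := by
  have hsplit (x : G) : #B = #(B ∩ (x +ᵥ B)) + translateExcess B x := by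
    rw [translateExcess, inter_comm, card_inter_add_card_sdiff, card_vadd_finset]
  calc #B * #X = ∑ _x ∈ X, #B := by rw [sum_const, smul_eq_mul, mul_comm]
    _ = ∑ x ∈ X, #(B ∩ (x +ᵥ B)) + ∑ x ∈ X, translateExcess B x := by
      rw [← sum_add_distrib]; exact sum_congr rfl fun x _ ↦ hsplit x
    _ ≤ _ := by gcongr; exact sum_card_inter_vadd_le B X

end TranslateExcess

section Multiples

lemma translateExcess_le_of_mem_nsmul {A B : Finset G} {L : ℕ}
    (hL : ∀ a ∈ A, translateExcess B a ≤ L) (j : ℕ) :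
    ∀ x ∈ j • A, translateExcess B x ≤ j * L := by
  induction j with
  | zero => simp [translateExcess_zero]
  | succ j ih =>
    intro x hx
    rw [succ_nsmul] at hx
    obtain ⟨y, hy, a, ha, rfl⟩ := mem_add.1 hx
    grw [translateExcess_add_le, ih y hy, hL a ha, add_mul, one_mul]

lemma closure_subset_nsmul {A : Finset G} {j : ℕ} (hA₀ : 0 ∈ A) (hneg : -A = A)
    (hj : (j + 1) • A ⊆ j • A) : (AddSubgroup.closure (A : Set G) : Set G) ⊆ ↑(j • A) := by
  intro x hx
  induction hx using AddSubgroup.closure_induction_right with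
  | zero => exact mem_coe.2 (zero_mem_nsmul hA₀)
  | add_right x _ a ha ih => exact hj (succ_nsmul A j ▸ add_mem_add ih ha)
  | add_neg_cancel x _ a ha ih =>
    have ha' : -a ∈ A := hneg ▸ neg_mem_neg ha
    exact hj (succ_nsmul A j ▸ add_mem_add ih ha')

lemma exists_disjoint_subset_nsmul {A X : Finset G} {j r : ℕ} (hA₀ : 0 ∈ A) (hneg : -A = A)
    (hX : X ⊆ j • A) (hr : r ≤ #A)
    (hcard : (#X + r : ℕ) ≤ (AddSubgroup.closure (A : Set G) : Set G).encard) :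
    ∃ Y ⊆ (j + 3) • A, Disjoint X Y ∧ #Y = r := by
  have hmono {i k : ℕ} (h : i ≤ k) : i • A ⊆ k • A := nsmul_subset_nsmul_right hA₀ h
  by_cases hstable : (j + 2) • A ⊆ (j + 1) • A
  · have hcard' : #X + r ≤ #((j + 1) • A) := by
      have := hcard.trans (Set.encard_le_encard (closure_subset_nsmul hA₀ hneg hstable))
      rwa [Set.encard_coe_eq_coe_finsetCard, Nat.cast_le] at this
    obtain ⟨Y, hY, rfl⟩ := exists_subset_card_eq
      (show r ≤ #(((j + 1) • A) \ X) by grw [← le_card_sdiff]; lia)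
    exact ⟨Y, hY.trans <| sdiff_subset.trans <| hmono (by lia),
      disjoint_sdiff.mono_right hY, rfl⟩
  · -- A translate of `A = -A` by a point outside the next ball `(j + 1) • A` avoids `j • A`.
    obtain ⟨z, hz, hz'⟩ := not_subset.1 hstable
    obtain ⟨Y, hY, rfl⟩ := exists_subset_card_eq (card_vadd_finset z A ▸ hr)
    refine ⟨Y, hY.trans ?_, disjoint_left.2 fun x hxX hxY ↦ hz' ?_, rfl⟩
    · rw [succ_nsmul]
      exact vadd_finset_subset_add hz
    · obtain ⟨a, ha, rfl⟩ := mem_vadd_finset.1 (hY hxY)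
      have hneg_mem : -a ∈ A := hneg ▸ neg_mem_neg ha
      simpa [succ_nsmul] using add_mem_add (hX hxX) hneg_mem

lemma exists_subset_nsmul_sum_le {A : Finset G} {f : G → ℕ} {L N r : ℕ} (hA₀ : 0 ∈ A)
    (hneg : -A = A) (hf : ∀ j, ∀ x ∈ j • A, f x ≤ j * L) (hr : r ≤ #A)
    (hcard : (N * #A + r : ℕ) ≤ (AddSubgroup.closure (A : Set G) : Set G).encard) :
    ∃ X ⊆ (3 * N + 1) • A, #X = N * #A + r ∧
      2 * ∑ x ∈ X, f x + N * #A * L ≤ (3 * N ^ 2 * #A + 2 * r * (3 * N + 1)) * L := by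
  have hsum {j : ℕ} {Y : Finset G} (hY : Y ⊆ j • A) : ∑ y ∈ Y, f y ≤ #Y * (j * L) :=
    sum_le_card_nsmul _ _ _ fun y hy ↦ hf j y (hY hy)
  induction N generalizing r with
  | zero =>
    obtain ⟨X, hX, rfl⟩ := exists_subset_card_eq hr
    have hX' : X ⊆ 1 • A := by rwa [one_nsmul]
    exact ⟨X, hX', by simp, by linarith [hsum hX']⟩
  | succ N ih =>
    have hle : N * #A + #A ≤ (N + 1) * #A + r := by lia
    obtain ⟨X, hX, hXcard, hXsum⟩ := ih le_rfl (hcard.trans' (mod_cast hle))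
    rw [← Nat.succ_mul] at hXcard
    obtain ⟨Y, hY, hdisj, rfl⟩ := exists_disjoint_subset_nsmul hA₀ hneg hX hr (hXcard ▸ hcard)
    refine ⟨X ∪ Y, union_subset (hX.trans ?_) hY, ?_, ?_⟩
    · exact nsmul_subset_nsmul_right hA₀ (by lia)
    · rw [card_union_of_disjoint hdisj, hXcard]
    · rw [sum_union hdisj]
      linarith [hsum hY]

lemma card_lt_six_mul_of_two_mul_card_lt {A B : Finset G} {L : ℕ}
    (hL : ∀ a ∈ A, translateExcess B a ≤ L) (hB : B.Nonempty) (hBA : 2 * #B < #A)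
    (hLB : 4 * L ≤ 3 * #B) : #A < 6 * L := by
  have hB₀ : 0 < #B := hB.card_pos
  have havg : #B * #A ≤ #B ^ 2 + #A * L := by
    grw [card_mul_card_le_sq_add_sum_translateExcess B A, sum_le_card_nsmul _ _ _ hL, smul_eq_mul]
  have hA_le : #A ≤ 4 * #B := by nlinarith
  nlinarith

lemma card_lt_six_mul_of_card_le_two_mul {A B : Finset G} {L : ℕ} (hA₀ : 0 ∈ A) (hneg : -A = A)
    (hL : ∀ a ∈ A, translateExcess B a ≤ L) (hAB : #A ≤ 2 * #B)
    (hcard : (2 * #B : ℕ) ≤ (AddSubgroup.closure (A : Set G) : Set G).encard) :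
    #A < 6 * L := by
  have hApos : 0 < #A := card_pos.2 ⟨0, hA₀⟩
  obtain ⟨N, r, hN, hr, hdiv⟩ : ∃ N r, 0 < N ∧ r < #A ∧ N * #A + r = 2 * #B :=
    ⟨2 * #B / #A, 2 * #B % #A, Nat.div_pos hAB hApos, Nat.mod_lt _ hApos, Nat.div_add_mod' ..⟩
  obtain ⟨X, -, hXcard, hXsum⟩ := exists_subset_nsmul_sum_le hA₀ hneg
    (translateExcess_le_of_mem_nsmul hL) hr.le (hdiv ▸ hcard)
  rw [hdiv] at hXcard
  have hB_sq_le : #B ^ 2 ≤ ∑ x ∈ X, translateExcess B x := by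
    linarith [hXcard ▸ card_mul_card_le_sq_add_sum_translateExcess B X]
  by_contra! hLA
  have hN_le : N * #A ≤ 3 * N ^ 2 * #A + 2 * r * (3 * N + 1) := by nlinarith [Nat.zero_le r]
  have hsq : 3 * (2 * #B) ^ 2 + N * #A * #A ≤
      (3 * N ^ 2 * #A + 2 * r * (3 * N + 1)) * #A := by
    generalize 3 * N ^ 2 * #A + 2 * r * (3 * N + 1) = P at hXsum hN_le ⊢
    nlinarith
  have hquadratic : 3 * r ^ 2 + N * #A ^ 2 ≤ 2 * r * #A := by
    rw [← hdiv] at hsq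
    linarith
  zify at hN hApos hquadratic
  nlinarith [sq_nonneg (#A - r : ℤ)]

lemma exists_lt_translateExcess_of_symmetric {A B : Finset G} (hA₀ : 0 ∈ A) (hneg : -A = A)
    (hB : B.Nonempty) (hcard : (2 * #B : ℕ) ≤ (AddSubgroup.closure (A : Set G) : Set G).encard) :
    ∃ a ∈ A, 3 * #B < 4 * translateExcess B a ∨ #A < 6 * translateExcess B a := by
  obtain ⟨a, ha, hsup⟩ := exists_mem_eq_sup A ⟨0, hA₀⟩ (translateExcess B)
  have hmax (x : G) (hx : x ∈ A) : translateExcess B x ≤ translateExcess B a := hsup ▸ le_sup hx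
  refine ⟨a, ha, or_iff_not_imp_left.2 fun hsmall ↦ ?_⟩
  obtain hBA | hAB := lt_or_ge (2 * #B) #A
  · exact card_lt_six_mul_of_two_mul_card_lt hmax hB hBA (not_lt.1 hsmall)
  · exact card_lt_six_mul_of_card_le_two_mul hA₀ hneg hmax hAB hcard

end Multiples

section SubsetSum

lemma subsetSum_insert {T : Finset G} {x : G} (hx : x ∉ T) :
    (insert x T).subsetSum = T.subsetSum ∪ (x +ᵥ T.subsetSum) := by
  refine Subset.antisymm (fun s hs ↦ ?_) (union_subset (subsetSum_mono (subset_insert x T))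
    (vadd_finset_subsetSum_subset_subsetSum_insert hx))
  obtain ⟨R, hR, rfl⟩ := mem_subsetSum_iff.1 hs
  by_cases hxR : x ∈ R
  · refine mem_union_right _ (mem_vadd_finset.2 ⟨∑ y ∈ R.erase x, y, ?_, add_sum_erase R id hxR⟩)
    exact mem_subsetSum_iff.2 ⟨R.erase x, subset_insert_iff.1 hR, rfl⟩
  · exact mem_union_left _ (mem_subsetSum_iff.2 ⟨R, (subset_insert_iff_of_notMem hxR).1 hR, rfl⟩)

lemma card_subsetSum_insert {T : Finset G} {x : G} (hx : x ∉ T) :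
    #(insert x T).subsetSum = #T.subsetSum + translateExcess T.subsetSum x := by
  rw [subsetSum_insert hx, union_comm, ← card_sdiff_add_card, add_comm, translateExcess]

lemma subsetSum_subset_closure (T : Finset G) :
    (T.subsetSum : Set G) ⊆ AddSubgroup.closure (T : Set G) := by
  intro s hs
  obtain ⟨R, hR, rfl⟩ := mem_subsetSum_iff.1 hs
  exact sum_mem fun x hx ↦ AddSubgroup.subset_closure (hR hx)

lemma card_subsetSum_insert_of_notMem_closure {T : Finset G} {x : G}
    (hx : x ∉ AddSubgroup.closure (T : Set G)) :
    #(insert x T).subsetSum = 2 * #T.subsetSum := by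
  have hdisj : Disjoint T.subsetSum (x +ᵥ T.subsetSum) := by
    refine disjoint_left.2 fun s hs hs' ↦ hx ?_
    obtain ⟨s, hs₀, rfl⟩ := mem_vadd_finset.1 hs'
    exact (AddSubgroup.add_mem_cancel_right _ (subsetSum_subset_closure T hs₀)).1
      (subsetSum_subset_closure T hs)
  rw [subsetSum_insert fun hxT ↦ hx (AddSubgroup.subset_closure hxT),
    card_union_of_disjoint hdisj, card_vadd_finset, two_mul]

end SubsetSum

section Scherk

lemma exists_add_eq_zero_of_vadd_subset {A : Finset G} {x : G} (hA₀ : 0 ∈ A)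
    (hx : x +ᵥ A ⊆ A) : ∃ a ∈ A, x + a = 0 := by
  rw [← eq_of_subset_of_card_le hx (card_vadd_finset x A).ge] at hA₀
  exact mem_vadd_finset.1 hA₀

lemma card_add_card_le_card_add_add_one {A B : Finset G} (hA₀ : 0 ∈ A) (hB₀ : 0 ∈ B)
    (hAB : ∀ a ∈ A, ∀ b ∈ B, a + b = 0 → b = 0) : #A + #B ≤ #(A + B) + 1 := by
  induction B using Finset.strongInduction generalizing A with
  | H B ih =>
    by_cases hstable : ∀ b ∈ B, b +ᵥ A ⊆ A
    · have hB : B = {0} := eq_singleton_iff_unique_mem.2 ⟨hB₀, fun b hb ↦ by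
        obtain ⟨a, ha, hba⟩ := exists_add_eq_zero_of_vadd_subset hA₀ (hstable b hb)
        exact hAB a ha b hb (by rwa [add_comm])⟩
      simp [hB]
    push Not at hstable
    obtain ⟨b₀, hb₀, hb₀A⟩ := hstable
    obtain ⟨e, he, heb₀⟩ : ∃ e ∈ A, e + b₀ ∉ A := by
      obtain ⟨y, hy, hyA⟩ := not_subset.1 hb₀A
      obtain ⟨e, he, rfl⟩ := mem_vadd_finset.1 hy
      exact ⟨e, he, by rwa [add_comm]⟩
    have hmem {y : G} : y ∈ -e +ᵥ A ↔ e + y ∈ A := by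
      rw [← neg_vadd_mem_iff, neg_neg, vadd_eq_add]
    have hlt : B ∩ (-e +ᵥ A) ⊂ B :=
      ⟨inter_subset_left, fun h ↦ heb₀ (hmem.1 (mem_inter.1 (h hb₀)).2)⟩
    have htransform : ∀ a ∈ A ∪ (e +ᵥ B), ∀ b ∈ B ∩ (-e +ᵥ A), a + b = 0 → b = 0 := by
      intro a ha b hb hab
      obtain ⟨hb, heb⟩ := mem_inter.1 hb
      obtain ha | ha := mem_union.1 ha
      · exact hAB a ha b hb hab
      obtain ⟨c, hc, rfl⟩ := mem_vadd_finset.1 ha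
      rw [vadd_eq_add] at hab
      have hc₀ : c = 0 := hAB (e + b) (hmem.1 heb) c hc (by rwa [add_right_comm])
      exact hAB e he b hb (by rwa [hc₀, add_zero] at hab)
    have hcard := addDysonETransform.card e (A, B)
    have hsub := card_le_card (addDysonETransform.subset e (A, B))
    simp only [addDysonETransform] at hcard hsub
    have := ih _ hlt (mem_union_left _ hA₀) (mem_inter.2 ⟨hB₀, hmem.2 (by rwa [add_zero])⟩)
      htransform
    lia

end Scherk

section GrowthBound

/-- The invariant for the number `b` of subset sums of `t` elements chosen greedily among `k`.
Until the second alternative holds, `b` grows exponentially; from then on the next element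
contributes at least `(k - t + 1) / 3` sums. The last inequality is
`b ≥ 1 + t (2 k + 3 - t) / 6 - (2 k + 3)² / 132`, without denominators or subtraction. -/
def GrowthBound (k t b : ℕ) : Prop :=
  (3 * t ^ 2 + 4 ≤ 4 * b ∨ 4 * (k + 1) ≤ 9 * b + 4 * t + 3) ∧
    22 * t * (2 * k + 3) + 132 ≤ 132 * b + 22 * t ^ 2 + (2 * k + 3) ^ 2

lemma growthBound_zero {k b : ℕ} (hb : 0 < b) : GrowthBound k 0 b :=
  ⟨.inl (by lia), by nlinarith⟩

lemma three_mul_succ_sq_add_four_le {t b g : ℕ} (hb : 3 * t ^ 2 + 4 ≤ 4 * b)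
    (hg : 3 * b < 4 * g) : 3 * (t + 1) ^ 2 + 4 ≤ 4 * (b + g) := by
  obtain ht | ht := lt_or_ge t 3
  · interval_cases t <;> lia
  · nlinarith

lemma GrowthBound.of_three_mul_sq_add_four_le {k t b : ℕ} (hb : 3 * t ^ 2 + 4 ≤ 4 * b) :
    GrowthBound k t b := by
  refine ⟨.inl hb, ?_⟩
  zify at hb ⊢
  nlinarith [sq_nonneg (11 * t - (2 * k + 3) : ℤ)]

lemma GrowthBound.succ {k t b g : ℕ} (h : GrowthBound k t b)
    (hg : 3 * b < 4 * g ∨ k < t + 3 * g) : GrowthBound k (t + 1) (b + g) := by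
  obtain ⟨hphase, hbound⟩ := h
  by_cases hsaturated : 4 * (k + 1) ≤ 9 * b + 4 * t + 3
  · have hgain : k + 1 ≤ t + 3 * g := by lia
    exact ⟨.inr (by lia), by nlinarith⟩
  · exact .of_three_mul_sq_add_four_le <|
      three_mul_succ_sq_add_four_le (hphase.resolve_right hsaturated) (by lia)

lemma GrowthBound.sq_add_nine_le {t e b : ℕ} (ht : 0 < t) (het : e ≤ 2 * t)
    (h : GrowthBound (t + e) t b) : (t + e) ^ 2 + 9 ≤ 9 * b + e ^ 2 := by
  nlinarith [h.2, Nat.mul_le_mul_left e het, Nat.mul_le_mul_left t het]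

end GrowthBound

section GrowthOfSubsetSums

variable {S T : Finset G}

lemma ZeroSumFree.two_mul_card_le (hS : ZeroSumFree S) (hS₂ : #{x ∈ S | addOrderOf x = 2} ≤ 1) :
    2 * #S ≤ #(insert 0 (S ∪ -S)) := by
  have hinter : S ∩ -S ⊆ {x ∈ S | addOrderOf x = 2} := by
    intro x hx
    obtain ⟨hx, hneg⟩ := mem_inter.1 hx
    exact mem_filter.2 ⟨hx, hS.addOrderOf_eq_two hx (mem_neg'.1 hneg)⟩
  have h₀ : (0 : G) ∉ S ∪ -S := by simp [hS.zero_notMem]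
  have := card_union_add_card_inter S (-S)
  rw [card_insert_of_notMem h₀]
  grind [card_le_card hinter, card_neg S]

lemma ZeroSumFree.card_subsetSum_add_card_subsetSum_sdiff_le (hS : ZeroSumFree S) (hTS : T ⊆ S) :
    #T.subsetSum + #(S \ T).subsetSum ≤ #S.subsetSum + 1 := by
  have hunion {P Q : Finset G} (hP : P ⊆ T) (hQ : Q ⊆ S \ T) :
      P ∪ Q ⊆ S ∧ ∑ x ∈ P ∪ Q, x = ∑ x ∈ P, x + ∑ x ∈ Q, x :=
    ⟨union_subset (hP.trans hTS) (hQ.trans sdiff_subset),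
      sum_union (disjoint_sdiff.mono hP hQ)⟩
  have hsub : T.subsetSum + (S \ T).subsetSum ⊆ S.subsetSum := by
    intro s hs
    obtain ⟨p, hp, q, hq, rfl⟩ := mem_add.1 hs
    obtain ⟨P, hP, rfl⟩ := mem_subsetSum_iff.1 hp
    obtain ⟨Q, hQ, rfl⟩ := mem_subsetSum_iff.1 hq
    exact mem_subsetSum_iff.2 ⟨P ∪ Q, hunion hP hQ⟩
  refine (card_add_card_le_card_add_add_one zero_mem_subsetSum zero_mem_subsetSum ?_).trans
    (Nat.add_le_add_right (card_le_card hsub) 1)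
  intro p hp q hq hpq
  obtain ⟨P, hP, rfl⟩ := mem_subsetSum_iff.1 hp
  obtain ⟨Q, hQ, rfl⟩ := mem_subsetSum_iff.1 hq
  obtain ⟨hPQ, hsum⟩ := hunion hP hQ
  rw [(union_eq_empty.1 (hS.eq_empty hPQ (hsum.trans hpq))).2, sum_empty]

lemma ZeroSumFree.disjoint_subsetSum_neg_sdiff (hS : ZeroSumFree S) (hTS : T ⊆ S) :
    Disjoint T.subsetSum (-(S \ T)) := by
  refine disjoint_left.2 fun s hs hneg ↦ ?_
  obtain ⟨R, hR, rfl⟩ := mem_subsetSum_iff.1 hs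
  obtain ⟨hxS, hxT⟩ := mem_sdiff.1 (mem_neg'.1 hneg)
  refine hS _ (insert_subset hxS (hR.trans hTS)) (insert_nonempty _ R) ?_
  rw [sum_insert fun h ↦ hxT (hR h), neg_add_cancel]

lemma ZeroSumFree.exists_mem_lt_translateExcess (hS : ZeroSumFree S)
    (hS₂ : #{x ∈ S | addOrderOf x = 2} ≤ 1) {B : Finset G} (hB : B.Nonempty)
    (hcard : (2 * #B : ℕ) ≤ (AddSubgroup.closure (S : Set G) : Set G).encard) :
    ∃ x ∈ S, 3 * #B < 4 * translateExcess B x ∨ #S < 3 * translateExcess B x := by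
  have hneg : -insert 0 (S ∪ -S) = insert 0 (S ∪ -S) := by
    ext x
    simp [or_comm]
  have hle : AddSubgroup.closure (S : Set G) ≤
      AddSubgroup.closure (insert 0 (S ∪ -S) : Finset G) :=
    AddSubgroup.closure_mono (by grind)
  obtain ⟨a, ha, hlarge⟩ := exists_lt_translateExcess_of_symmetric (mem_insert_self 0 _) hneg hB
    (hcard.trans (Set.encard_le_encard hle))
  have := hS.two_mul_card_le hS₂
  obtain rfl | ha | ha : a = 0 ∨ a ∈ S ∨ -a ∈ S := by simpa using ha
  · simp [translateExcess_zero] at hlarge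
  · exact ⟨a, ha, by lia⟩
  · exact ⟨-a, ha, by rw [translateExcess_neg]; lia⟩


lemma ZeroSumFree.exists_mem_lt_translateExcess_of_disjoint (hS : ZeroSumFree S)
    (hS₂ : #{x ∈ S | addOrderOf x = 2} ≤ 1) (hSne : S.Nonempty) {B : Finset G} (hB : B.Nonempty)
    (hBS : (B : Set G) ⊆ AddSubgroup.closure (S : Set G)) (hdisj : Disjoint B (-S)) :
    ∃ x ∈ S, 3 * #B < 4 * translateExcess B x ∨ #S < 3 * translateExcess B x := by
  set H := AddSubgroup.closure (S : Set G)
  by_cases hcard : (2 * #B : ℕ) ≤ (H : Set G).encard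
  · exact hS.exists_mem_lt_translateExcess hS₂ hB hcard
  -- `B` fills more than half of `H`; its complement in `H` has the same excesses and contains `-S`.
  obtain ⟨K, hK⟩ : ∃ K : Finset G, (K : Set G) = H :=
    (Set.finite_of_encard_le_coe (not_le.1 hcard).le).exists_finset_coe
  have hK_mem {y : G} : y ∈ K ↔ y ∈ H := by rw [← mem_coe, hK, SetLike.mem_coe]
  have hBK : B ⊆ K := fun y hy ↦ hK_mem.2 (hBS hy)
  have hK_card : #K < 2 * #B := by
    rwa [not_le, ← hK, Set.encard_coe_eq_coe_finsetCard, Nat.cast_lt] at hcard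
  have hK_vadd {x : G} (hx : x ∈ S) : x +ᵥ K = K := by
    refine eq_of_subset_of_card_le (fun y hy ↦ ?_) (card_vadd_finset x K).ge
    obtain ⟨z, hz, rfl⟩ := mem_vadd_finset.1 hy
    exact hK_mem.2 (add_mem (AddSubgroup.subset_closure hx) (hK_mem.1 hz))
  have hneg : -S ⊆ K \ B := by
    refine subset_sdiff.2 ⟨fun y hy ↦ hK_mem.2 ?_, hdisj.symm⟩
    exact neg_mem_iff.1 (AddSubgroup.subset_closure (mem_neg'.1 hy))
  have hS_card : #S ≤ #(K \ B) := card_neg S ▸ card_le_card hneg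
  have hcompl : #(K \ B) + #B = #K := card_sdiff_add_card_eq_card hBK
  have hSpos : 0 < #S := hSne.card_pos
  obtain ⟨x, hx, hlarge⟩ := hS.exists_mem_lt_translateExcess hS₂ (B := K \ B)
    (card_pos.1 (by lia)) (by
      rw [← hK, Set.encard_coe_eq_coe_finsetCard, Nat.cast_le]
      lia)
  rw [translateExcess_sdiff hBK (hK_vadd hx)] at hlarge
  exact ⟨x, hx, by lia⟩

lemma ZeroSumFree.exists_subset_growthBound (hS : ZeroSumFree S)
    (hS₂ : #{x ∈ S | addOrderOf x = 2} ≤ 1)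
    (hgen : ∀ U ⊆ S, 2 * #S < 3 * #U → (S : Set G) ⊆ AddSubgroup.closure (U : Set G)) {t : ℕ}
    (ht : 3 * t ≤ #S + 2) : ∃ T ⊆ S, #T = t ∧ GrowthBound #S t #T.subsetSum := by
  induction t with
  | zero => exact ⟨∅, empty_subset S, card_empty, growthBound_zero subsetSum_nonempty.card_pos⟩
  | succ t ih =>
    obtain ⟨T, hTS, rfl, hT⟩ := ih (by lia)
    have hcard : #(S \ T) + #T = #S := card_sdiff_add_card_eq_card hTS
    have hclosure : (T.subsetSum : Set G) ⊆ AddSubgroup.closure ((S \ T : Finset G) : Set G) :=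
      (subsetSum_subset_closure T).trans <| AddSubgroup.closure_le _ |>.2 <|
        (coe_subset.2 hTS).trans <| hgen _ sdiff_subset (by lia)
    obtain ⟨x, hx, hlarge⟩ := (hS.mono sdiff_subset).exists_mem_lt_translateExcess_of_disjoint
      ((card_le_card (filter_subset_filter _ sdiff_subset)).trans hS₂) (card_pos.1 (by lia))
      subsetSum_nonempty hclosure (hS.disjoint_subsetSum_neg_sdiff hTS)
    obtain ⟨hxS, hxT⟩ := mem_sdiff.1 hx
    refine ⟨insert x T, insert_subset hxS hTS, card_insert_of_notMem hxT, ?_⟩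
    rw [card_subsetSum_insert hxT]
    exact hT.succ (by lia)

theorem ZeroSumFree.sq_card_add_nine_le (hS : ZeroSumFree S)
    (hS₂ : #{x ∈ S | addOrderOf x = 2} ≤ 1) : #S ^ 2 + 9 ≤ 9 * #S.subsetSum := by
  induction S using Finset.strongInduction with
  | H S ih =>
    have ih' {U : Finset G} (hU : U ⊂ S) : #U ^ 2 + 9 ≤ 9 * #U.subsetSum :=
      ih U hU (hS.mono hU.subset) ((card_le_card (filter_subset_filter _ hU.subset)).trans hS₂)
    obtain rfl | hne := S.eq_empty_or_nonempty
    · simp [subsetSum]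
    have hpos : 0 < #S := hne.card_pos
    by_cases hgen : ∀ U ⊆ S, 2 * #S < 3 * #U → (S : Set G) ⊆ AddSubgroup.closure (U : Set G)
    · obtain ⟨T, hTS, hT_card, hT⟩ :=
        hS.exists_subset_growthBound hS₂ hgen (t := #S - 2 * #S / 3) (by lia)
      have hcard : #T + #(S \ T) = #S := by rw [add_comm, card_sdiff_add_card_eq_card hTS]
      have hTne : T.Nonempty := card_pos.1 (by lia)
      rw [← hT_card, ← hcard] at hT
      have := hT.sq_add_nine_le hTne.card_pos (by lia)
      have := ih' (sdiff_ssubset hTS hTne)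
      have := hS.card_subsetSum_add_card_subsetSum_sdiff_le hTS
      rw [← hcard]
      lia
    · push Not at hgen
      obtain ⟨U, hUS, hU_card, hU⟩ := hgen
      obtain ⟨x, hxS, hxU⟩ := Set.not_subset.1 hU
      have hxU' : x ∉ U := fun h ↦ hxU (AddSubgroup.subset_closure h)
      have hTS : insert x U ⊆ S := insert_subset hxS hUS
      have hcard := card_sdiff_add_card_eq_card hTS
      have := ih' ⟨hUS, fun h ↦ hxU' (h hxS)⟩
      have := ih' (sdiff_ssubset hTS (insert_nonempty x U))
      have := hS.card_subsetSum_add_card_subsetSum_sdiff_le hTS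
      rw [card_subsetSum_insert_of_notMem_closure hxU] at this
      rw [card_insert_of_notMem hxU'] at hcard
      rw [← hcard] at hU_card ⊢
      nlinarith

end GrowthOfSubsetSums

lemma card_filter_addOrderOf_eq_two_le_one {G : Type*} [AddGroup G] [IsAddCyclic G] [Finite G]
    (S : Finset G) : #{x ∈ S | addOrderOf x = 2} ≤ 1 := by
  have := Fintype.ofFinite G
  by_cases h : 2 ∣ Fintype.card G
  · calc #{x ∈ S | addOrderOf x = 2} ≤ #{x : G | addOrderOf x = 2} :=
          card_le_card (filter_subset_filter _ (subset_univ S))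
      _ = 1 := by rw [IsAddCyclic.card_addOrderOf_eq_totient h, Nat.totient_two]
  · rw [filter_false_of_mem fun x _ hx ↦ h (by rw [← hx]; exact addOrderOf_dvd_card)]
    exact zero_le_one

end Olson

open Finset in
theorem olson_zero_sum_subset_general {G : Type*} [AddCommGroup G] [Finite G] (S : Finset G)
    (hS₂ : #{x ∈ S | addOrderOf x = 2} ≤ 1) (hS : 3 * √(Nat.card G) ≤ #S) :
    ∃ T ⊆ S, T.Nonempty ∧ ∑ a ∈ T, a = 0 := by
  classical
  by_contra! hfree
  have hsq : (9 * Nat.card G : ℝ) ≤ #S ^ 2 := by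
    calc (9 * Nat.card G : ℝ) = (3 * √(Nat.card G)) ^ 2 := by
          rw [mul_pow, Real.sq_sqrt (Nat.cast_nonneg _)]; norm_num
      _ ≤ #S ^ 2 := by gcongr
  have hsums : #S ^ 2 + 9 ≤ 9 * #S.subsetSum := Olson.ZeroSumFree.sq_card_add_nine_le hfree hS₂
  have hle : #S.subsetSum ≤ Nat.card G := by
    have := Fintype.ofFinite G
    rw [Nat.card_eq_fintype_card]
    exact card_le_univ _
  norm_cast at hsq
  lia

/-- Olson's theorem: if `S ⊆ ℤ/nℤ` has `|S| ≥ 3√n`, then some nonempty subset of `S`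
sums to `0` in `ℤ/nℤ`. -/
theorem olson_zero_sum_subset (n : ℕ) (hn : 1 ≤ n) (S : Finset (ZMod n))
    (hS : 3 * Real.sqrt n ≤ S.card) :
    ∃ T ⊆ S, T.Nonempty ∧ ∑ a ∈ T, a = 0 := by
  have : NeZero n := ⟨by lia⟩
  exact olson_zero_sum_subset_general S (Olson.card_filter_addOrderOf_eq_two_le_one S)
    (by rwa [Nat.card_zmod])
end
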